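/- Let b ≥ 1 and l ≥ 1, and let r_0, r_1, …, r_l be positive natural numbers with r_l = h and r_0 = w. For d = 1, …, l let W_d be a tensor of size r_d × r_{d-1} × b with frontal slices W_d^{(k)} (complex r_d × r_{d-1} matrices for k ∈ {1,…,b}). Let Z be the face-wise product W_l Δ W_{l-1} Δ ⋯ Δ W_1, i.e., the h × w × b tensor with k-th frontal slice Z^{(k)} = W_l^{(k)} · W_{l-1}^{(k)} ⋯ W_1^{(k)}. Let F be the b × b DFT matrix with entries F_{j,k} = ω^{j·k}, ω = exp(-2πi/b), and define X = Z ×₃ F⁻¹ (the inverse discrete Fourier transform of Z along the third mode). Then the tensor tubal rank of X, namely max_{k} rank((X ×₃ F)^{(k)}), is at most min{r_0, r_1, …, r_l}. -/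

import Mathlib

/-!
Taking the inverse transform and then the transform along the third mode returns `Z`, because the
DFT matrix is the Vandermonde matrix of the pairwise distinct nodes `1, ω, …, ω ^ (b - 1)` and hence
invertible (`isUnit_det_dft`, `mode3_mode3`). Each slice of `Z` is a product of matrices that
factors through a space of dimension `r d` for every `d ≤ l`, so its rank is at most `r d`
(`rank_chainProd_le`).
-/

/-- The product `M_n * M_{n-1} * ⋯ * M_1` of a chain of matrices with matching
dimensions, defined recursively (empty product is the identity). -/
noncomputable def chainProd (r : ℕ → ℕ) (M : ∀ d : ℕ, Matrix (Fin (r (d + 1))) (Fin (r d)) ℂ) :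
    ∀ n : ℕ, Matrix (Fin (r n)) (Fin (r 0)) ℂ
  | 0 => 1
  | n + 1 => M n * chainProd r M n

/-- The mode-3 product of an `h × w × b` tensor (given by its frontal slices)
with a `b × b` matrix `A`: the `k`-th frontal slice is `Σ_j A_{k,j} • Z^{(j)}`. -/
noncomputable def mode3 {h w b : ℕ} (Z : Fin b → Matrix (Fin h) (Fin w) ℂ)
    (A : Matrix (Fin b) (Fin b) ℂ) : Fin b → Matrix (Fin h) (Fin w) ℂ :=
  fun k => ∑ j : Fin b, A k j • Z j

theorem rank_chainProd_le (r : ℕ → ℕ)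
    (M : ∀ d : ℕ, Matrix (Fin (r (d + 1))) (Fin (r d)) ℂ) (n d : ℕ) (hd : d ≤ n) :
    (chainProd r M n).rank ≤ r d := by
  induction n with
  | zero =>
    obtain rfl : d = 0 := by omega
    exact Matrix.rank_le_height _
  | succ n ih =>
    rcases hd.lt_or_eq with h | rfl
    · exact (Matrix.rank_mul_le_right _ _).trans (ih (by omega))
    · exact Matrix.rank_le_height _

theorem mode3_mode3 {h w b : ℕ} (Z : Fin b → Matrix (Fin h) (Fin w) ℂ)
    (A B : Matrix (Fin b) (Fin b) ℂ) : mode3 (mode3 Z A) B = mode3 Z (B * A) := by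
  funext k
  simp only [mode3, Matrix.mul_apply, Finset.smul_sum, Finset.sum_smul, smul_smul]
  exact Finset.sum_comm

theorem mode3_one {h w b : ℕ} (Z : Fin b → Matrix (Fin h) (Fin w) ℂ) : mode3 Z 1 = Z := by
  funext k
  simp [mode3, Matrix.one_apply]

theorem isUnit_det_dft (b : ℕ) (hb : 1 ≤ b) (ω : ℂ)
    (hω : ω = Complex.exp (-2 * Real.pi * Complex.I / b))
    (F : Matrix (Fin b) (Fin b) ℂ) (hF : ∀ j k : Fin b, F j k = ω ^ ((j : ℕ) * (k : ℕ))) :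
    IsUnit F.det := by
  have hprim : IsPrimitiveRoot ω b := by
    have h := (Complex.isPrimitiveRoot_exp b (by omega)).inv
    rw [← Complex.exp_neg] at h
    have he : -2 * Real.pi * Complex.I / b = -(2 * Real.pi * Complex.I / b) := by ring
    rwa [hω, he]
  have hV : F = Matrix.vandermonde fun j : Fin b => ω ^ (j : ℕ) := by
    ext j k
    rw [hF, Matrix.vandermonde_apply, pow_mul]
  rw [isUnit_iff_ne_zero, hV, Matrix.det_vandermonde_ne_zero_iff]
  intro i j hij
  exact Fin.ext (hprim.pow_inj i.2 j.2 hij)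

/-- let `Z` be the face-wise product `W_l Δ ⋯ Δ W_1` (slice-wise
chain product of the frontal slices) and `X = Z ×₃ F⁻¹` with `F` the
unnormalized `b × b` DFT matrix.  Then the tubal rank of `X`, i.e.
`max_k rank((X ×₃ F)^{(k)})`, is at most `min {r_0, …, r_l}`. -/
theorem tubal_rank_facewise_chain_le_min (b l : ℕ) (hb : 1 ≤ b) (hl : 1 ≤ l)
    (r : ℕ → ℕ) (hr : ∀ d ≤ l, 0 < r d)
    (W : ∀ d : ℕ, Fin b → Matrix (Fin (r (d + 1))) (Fin (r d)) ℂ)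
    (Z : Fin b → Matrix (Fin (r l)) (Fin (r 0)) ℂ)
    (hZ : ∀ k : Fin b, Z k = chainProd r (fun d => W d k) l)
    (ω : ℂ) (hω : ω = Complex.exp (-2 * Real.pi * Complex.I / b))
    (F : Matrix (Fin b) (Fin b) ℂ) (hF : ∀ j k : Fin b, F j k = ω ^ ((j : ℕ) * (k : ℕ)))
    (X : Fin b → Matrix (Fin (r l)) (Fin (r 0)) ℂ) (hX : X = mode3 Z F⁻¹) :
    (Finset.univ.sup fun k : Fin b => (mode3 X F k).rank) ≤ (Finset.range (l + 1)).inf' (Finset.nonempty_range_iff.mpr l.succ_ne_zero) r := by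
  rw [hX, mode3_mode3, Matrix.mul_nonsing_inv F (isUnit_det_dft b hb ω hω F hF), mode3_one]
  refine Finset.sup_le fun k _ => Finset.le_inf' _ _ fun d hd => ?_
  rw [hZ k]
  exact rank_chainProd_le r _ l d (Nat.lt_succ_iff.mp (Finset.mem_range.mp hd))
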